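/- arXiv:2505.09429 — 7 statements merged into one kernel-verified Lean document; each statement's English description precedes it below -/
import Mathlib

section
/- Let p, a, d be real numbers with 0 < p ≤ 1, a > 1, a(1−p) < 1, and d > 0, and let i be a natural number. Then the series ∑_{k=0}^∞ p(1−p)^k · ( (∑_{j=0}^{i+k+1} 2a^j) + (−1)^k d ) / d converges, and its sum equals (1/(d(a−1))) · ( 2a^{i+2}p/(1 + a(p−1)) + p·d·(a−1)/(2−p) − 2 ). -/
/-- Expected competitive ratio series of the Fast Approach: for 0 < p ≤ 1, a > 1 with
a(1−p) < 1, d > 0 and i : ℕ, the series ∑ₖ p(1−p)ᵏ·((∑_{j=0}^{i+k+1} 2aʲ) + (−1)ᵏ d)/d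
converges to (1/(d(a−1)))·(2a^{i+2}p/(1+a(p−1)) + p·d·(a−1)/(2−p) − 2). -/
theorem fast_approach_series_sum (p a d : ℝ) (hp : 0 < p) (hp1 : p ≤ 1)
    (ha : 1 < a) (hap : a * (1 - p) < 1) (hd : 0 < d) (i : ℕ) :
    HasSum
      (fun k : ℕ =>
        p * (1 - p) ^ k * ((∑ j ∈ Finset.range (i + k + 2), 2 * a ^ j) + (-1 : ℝ) ^ k * d) / d)
      (1 / (d * (a - 1)) *
        (2 * a ^ (i + 2) * p / (1 + a * (p - 1)) + p * d * (a - 1) / (2 - p) - 2)) := by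
  have hq0 : 0 ≤ 1 - p := by linarith
  have hq1 : 1 - p < 1 := by linarith
  have h1 := (hasSum_geometric_of_lt_one (mul_nonneg (by linarith : (0:ℝ) ≤ a) hq0) hap).mul_left
    (2 * p * a ^ (i + 2) / (d * (a - 1)))
  have h2 := (hasSum_geometric_of_lt_one hq0 hq1).mul_left (2 * p / (d * (a - 1)))
  have h3 := (hasSum_geometric_of_abs_lt_one (r := -(1 - p))
    (by rw [abs_neg, abs_of_nonneg hq0]; exact hq1)).mul_left p
  have e1 : a - 1 ≠ 0 := by linarith
  have e2 : 1 + a * (p - 1) ≠ 0 := by nlinarith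
  have e3 : 2 - p ≠ 0 := by linarith
  have e4 : a ≠ 1 := by linarith
  have e5 : d ≠ 0 := hd.ne'
  have e6 : p ≠ 0 := hp.ne'
  convert (h1.sub h2).add h3 using 1
  · rfl
  · funext k
    rw [← Finset.mul_sum, geom_sum_eq e4, neg_pow (1 - p), mul_pow,
      show i + k + 2 = (i + 2) + k by ring, pow_add a (i + 2) k]
    generalize a ^ (i + 2) = A
    generalize a ^ k = B
    generalize (1 - p) ^ k = Q
    generalize (-1 : ℝ) ^ k = S
    field_simp
  · rw [show 1 - a * (1 - p) = 1 + a * (p - 1) by ring, show 1 - (1 - p) = p by ring,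
      show 1 - -(1 - p) = 2 - p by ring]
    generalize a ^ (i + 2) = A
    generalize 1 + a * (p - 1) = D at *
    field_simp
    ring
end

section
/- Let p, a, d be real numbers with 0 < p < 1, a > 1, and d > 0, and let i be a natural number. Then the sequence k ↦ p(1−p)^k · ( (∑_{j=0}^{i+k+1} 2a^j) + (−1)^k d ) / d is summable if and only if a(1−p) < 1. -/
/-- The Fast Approach expected competitive ratio series is summable iff a(1−p) < 1. -/
theorem fast_approach_summable_iff (p a d : ℝ) (hp : 0 < p) (hp1 : p < 1)
    (ha : 1 < a) (hd : 0 < d) (i : ℕ) :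
    Summable
      (fun k : ℕ =>
        p * (1 - p) ^ k * ((∑ j ∈ Finset.range (i + k + 2), 2 * a ^ j) + (-1 : ℝ) ^ k * d) / d)
      ↔ a * (1 - p) < 1 := by
  have ha1 : a - 1 ≠ 0 := by linarith
  have hd0 : d ≠ 0 := hd.ne'
  have hC : 2 * p * a ^ (i + 2) / (d * (a - 1)) ≠ 0 := by
    have : 0 < a - 1 := by linarith
    have : 0 < a := by linarith
    positivity
  have hrest : Summable (fun k : ℕ =>
      p * (-(1 - p)) ^ k - 2 * p / (d * (a - 1)) * (1 - p) ^ k) := by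
    apply Summable.sub
    · apply Summable.mul_left
      apply summable_geometric_of_abs_lt_one
      rw [abs_lt]; constructor <;> linarith
    · apply Summable.mul_left
      apply summable_geometric_of_abs_lt_one
      rw [abs_lt]; constructor <;> linarith
  have heq : (fun k : ℕ =>
        p * (1 - p) ^ k * ((∑ j ∈ Finset.range (i + k + 2), 2 * a ^ j) + (-1 : ℝ) ^ k * d) / d)
      = fun k : ℕ => 2 * p * a ^ (i + 2) / (d * (a - 1)) * (a * (1 - p)) ^ k
        + (p * (-(1 - p)) ^ k - 2 * p / (d * (a - 1)) * (1 - p) ^ k) := by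
    funext k
    rw [← Finset.mul_sum, geom_sum_eq ha.ne', neg_pow (1 - p), mul_pow a]
    generalize (1 - p) ^ k = q
    generalize (-1 : ℝ) ^ k = s
    field_simp
    ring
  have hnn : 0 ≤ a * (1 - p) := mul_nonneg (by linarith) (by linarith)
  have hgeo : Summable (fun k : ℕ => (a * (1 - p)) ^ k) ↔ a * (1 - p) < 1 := by
    rw [summable_geometric_iff_norm_lt_one, Real.norm_of_nonneg hnn]
  rw [heq, ← hgeo, ← summable_mul_left_iff (f := fun k : ℕ => (a * (1 - p)) ^ k) hC]
  constructor
  · intro h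
    exact (h.sub hrest).congr (fun k => by ring)
  · intro h
    exact h.add hrest
end

section
/- Let p and a be real numbers with 0 < p ≤ 1, a > 1 and a(1−p) < 1, and let i be a natural number. Then the function d ↦ (1/(d(a−1))) · ( 2a^{i+2}p/(1 + a(p−1)) + p·d·(a−1)/(2−p) − 2 ) is strictly decreasing on the interval (0, ∞). -/
/-- The closed-form expected competitive ratio of the Fast Approach is strictly decreasing
in the target distance d on (0, ∞). -/
theorem fast_cr_strictAnti (p a : ℝ) (hp : 0 < p) (hp1 : p ≤ 1)
    (ha : 1 < a) (hap : a * (1 - p) < 1) (i : ℕ) :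
    StrictAntiOn
      (fun d : ℝ =>
        1 / (d * (a - 1)) *
          (2 * a ^ (i + 2) * p / (1 + a * (p - 1)) + p * d * (a - 1) / (2 - p) - 2))
      (Set.Ioi 0) := by
  have hD : 0 < 1 + a * (p - 1) := by linarith
  have hpow : a ≤ a ^ (i + 2) := le_self_pow₀ ha.le (by omega)
  have hC : 2 < 2 * a ^ (i + 2) * p / (1 + a * (p - 1)) := by
    rw [lt_div_iff₀ hD]
    have := mul_le_mul_of_nonneg_right hpow hp.le
    linarith
  have ha1 : 0 < a - 1 := by linarith
  have h2 : 0 < 2 - p := by linarith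
  generalize 2 * a ^ (i + 2) * p / (1 + a * (p - 1)) = C at hC
  have key : ∀ d : ℝ, 0 < d → 1 / (d * (a - 1)) * (C + p * d * (a - 1) / (2 - p) - 2)
      = (C - 2) / (a - 1) / d + p / (2 - p) := by
    intro d hd
    have h3 := ha1.ne'
    have h4 := h2.ne'
    field_simp
    ring
  intro x hx y hy hxy
  have hx' : 0 < x := hx
  have hy' : 0 < y := hy
  simp only [key x hx', key y hy']
  have : 0 < (C - 2) / (a - 1) := div_pos (by linarith) ha1
  have := div_lt_div_of_pos_left this hx' hxy
  linarith
end

section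
/- Let p be a real number with 0 < p ≤ 1, let a = 2/(2−p), let i be a natural number, and let d be a real number with d ≥ a^i. Then ∑_{k=0}^∞ p(1−p)^k · ( (∑_{j=0}^{i+k+1} 2a^j) + (−1)^k d ) / d < 8/p + p/(2−p). -/
/-- Theorem 1 (analytic content): with a = 2/(2−p), for a target at distance d ≥ aⁱ,
the expected competitive ratio series of the Fast Approach is below 8/p + p/(2−p). -/
theorem fast_approach_cr_bound (p : ℝ) (hp : 0 < p) (hp1 : p ≤ 1) (i : ℕ)
    (d : ℝ) (hd : (2 / (2 - p)) ^ i ≤ d) :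
    (∑' k : ℕ,
      p * (1 - p) ^ k *
        ((∑ j ∈ Finset.range (i + k + 2), 2 * (2 / (2 - p)) ^ j) + (-1 : ℝ) ^ k * d) / d)
      < 8 / p + p / (2 - p) := by
  have h2 : 0 < 2 - p := by linarith
  obtain ⟨a, ha⟩ : ∃ a, a = 2 / (2 - p) := ⟨_, rfl⟩
  rw [← ha] at hd ⊢
  have ha0 : 0 < a := by rw [ha]; positivity
  have ha1 : a - 1 = p / (2 - p) := by rw [ha]; field_simp; ring
  have hane : a ≠ 1 := by
    have : 0 < a - 1 := by rw [ha1]; positivity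
    intro h; linarith
  have hda : 0 < d := lt_of_lt_of_le (by positivity) hd
  have hr : 1 - (1 - p) * a = p / (2 - p) := by rw [ha]; field_simp; ring
  have hrpos : 0 < p / (2 - p) := by positivity
  have g1 := hasSum_geometric_of_lt_one (r := (1 - p) * a)
    (mul_nonneg (by linarith) ha0.le) (by linarith)
  have g2 := hasSum_geometric_of_lt_one (r := 1 - p) (by linarith) (by linarith)
  have g3 := hasSum_geometric_of_abs_lt_one (r := -(1 - p)) (by rw [abs_lt]; constructor <;> linarith)
  rw [hr] at g1
  have key := ((g1.mul_left (p * 2 * a ^ (i + 2) / (p / (2 - p)) / d)).sub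
    (g2.mul_left (p * 2 / (p / (2 - p)) / d))).add (g3.mul_left p)
  have hS : (fun k : ℕ => p * (1 - p) ^ k *
        ((∑ j ∈ Finset.range (i + k + 2), 2 * a ^ j) + (-1 : ℝ) ^ k * d) / d) = fun k : ℕ =>
      p * 2 * a ^ (i + 2) / (p / (2 - p)) / d * ((1 - p) * a) ^ k
        - p * 2 / (p / (2 - p)) / d * (1 - p) ^ k + p * (-(1 - p)) ^ k := by
    funext k
    rw [← Finset.mul_sum, geom_sum_eq hane, ha1, neg_pow (1 - p) k, mul_pow]
    field_simp
    ring
  rw [hS, key.tsum_eq]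
  have e1 : p * 2 * a ^ (i + 2) / (p / (2 - p)) / d * (p / (2 - p))⁻¹ = 8 / p * (a ^ i / d) := by
    rw [pow_add]
    have : a ^ 2 = 4 / (2 - p) ^ 2 := by rw [ha, div_pow]; norm_num
    rw [this]; field_simp; ring
  have e2 : p * (1 - -(1 - p))⁻¹ = p / (2 - p) := by
    rw [div_eq_mul_inv]; congr 2; ring
  have e3 : 0 < p * 2 / (p / (2 - p)) / d * (1 - (1 - p))⁻¹ := by
    rw [sub_sub_cancel]; positivity
  have e4 : 8 / p * (a ^ i / d) ≤ 8 / p :=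
    mul_le_of_le_one_right (by positivity) ((div_le_one hda).2 hd)
  rw [e1, e2]
  linarith
end

section
/- Let v be a real number with 0 < v < 1, let a = 1 + √(2v/(1+v)), let i be a natural number, and let d be a real number with a^i < d ≤ a^{i+2}. Then ( ∑_{j=0}^{i+1}( a^{j−2} + (a^j − a^{j−2})/v + a^j ) + a^i + (d − a^i)/v ) / d < 3 + 2√(2 + 2/v) + 2/v, where a^{j−2} denotes a^j/a². -/
/-- Theorem 2 (analytic content): with a = 1 + √(2v/(1+v)), for a target at distance
d ∈ (aⁱ, a^{i+2}], the competitive ratio of the Slow Approach is below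
3 + 2√(2 + 2/v) + 2/v. -/
theorem slow_approach_cr_bound (v : ℝ) (hv : 0 < v) (hv1 : v < 1) (i : ℕ) (d : ℝ)
    (hd1 : (1 + Real.sqrt (2 * v / (1 + v))) ^ i < d)
    (hd2 : d ≤ (1 + Real.sqrt (2 * v / (1 + v))) ^ (i + 2)) :
    ((∑ j ∈ Finset.range (i + 2),
        ((1 + Real.sqrt (2 * v / (1 + v))) ^ j / (1 + Real.sqrt (2 * v / (1 + v))) ^ 2 +
          ((1 + Real.sqrt (2 * v / (1 + v))) ^ j -
            (1 + Real.sqrt (2 * v / (1 + v))) ^ j / (1 + Real.sqrt (2 * v / (1 + v))) ^ 2) / v +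
          (1 + Real.sqrt (2 * v / (1 + v))) ^ j)) +
      (1 + Real.sqrt (2 * v / (1 + v))) ^ i +
      (d - (1 + Real.sqrt (2 * v / (1 + v))) ^ i) / v) / d
      < 3 + 2 * Real.sqrt (2 + 2 / v) + 2 / v := by
  have hs : 0 < Real.sqrt (2 * v / (1 + v)) := Real.sqrt_pos.mpr (by positivity)
  have hs2 : Real.sqrt (2 * v / (1 + v)) ^ 2 = 2 * v / (1 + v) := Real.sq_sqrt (by positivity)
  have hr : Real.sqrt (2 + 2 / v) = 2 / Real.sqrt (2 * v / (1 + v)) := by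
    rw [Real.sqrt_eq_iff_mul_self_eq (by positivity) (by positivity), ← sq, div_pow, hs2]
    field_simp
    ring
  rw [hr]
  generalize Real.sqrt (2 * v / (1 + v)) = s at *
  have hw : s * (1 + 1 / v) = 2 / s := by
    have h : s ^ 2 * (1 + v) = 2 * v := by rw [hs2]; field_simp
    field_simp
    linarith
  have hsum : ∀ n : ℕ, (∑ j ∈ Finset.range n, ((1 + s) ^ j / (1 + s) ^ 2 +
      ((1 + s) ^ j - (1 + s) ^ j / (1 + s) ^ 2) / v + (1 + s) ^ j)) =
      ((1 + s) ^ n - 1) / (1 + s) ^ 2 * (2 / s + 2 + s + (2 + s) / v) := by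
    intro n
    induction n with
    | zero => simp
    | succ n ih =>
      rw [Finset.sum_range_succ, ih, pow_succ _ n]
      generalize (1 + s) ^ n = p
      field_simp
      ring
  rw [hsum]
  have hp : 0 < (1 + s) ^ i := by positivity
  have hd : 0 < d := hp.trans hd1
  rw [div_lt_iff₀ hd]
  have hK : 0 < 2 / s + 2 + s + (2 + s) / v := by positivity
  have hK1 : 0 < 2 / s + 3 + s + (1 + s) / v := by positivity
  have h1 : ((1 + s) ^ (i + 2) - 1) / (1 + s) ^ 2 < (1 + s) ^ i := by
    rw [div_lt_iff₀ (by positivity), pow_add]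
    linarith
  have h2 := mul_lt_mul_of_pos_right h1 hK
  have h3 := mul_lt_mul_of_pos_right hd1 hK1
  have e : 3 + 2 * (2 / s) + 2 / v = (2 / s + 3 + s + (1 + s) / v) + 1 / v := by
    have : s * (1 + 1 / v) = s + s / v := by ring
    have h4 : (1 + s) / v = 1 / v + s / v := by ring
    have h5 : 2 / v = 1 / v + 1 / v := by ring
    linarith
  rw [e]
  have e2 : (1 + s) ^ i * (2 / s + 2 + s + (2 + s) / v) + (1 + s) ^ i + (d - (1 + s) ^ i) / v
      = (1 + s) ^ i * (2 / s + 3 + s + (1 + s) / v) + d / v := by ring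
  have e3 : (2 / s + 3 + s + (1 + s) / v + 1 / v) * d
      = d * (2 / s + 3 + s + (1 + s) / v) + d / v := by ring
  linarith
end

section
/- Let v be a real number with 0 < v ≤ 1. Then for every real β with β > 1/v, 1 + (1+β)( v(1+β) + √(4 + v(6βv + (1+β²)v − 4(1+β))) )/(2(βv − 1)) ≥ 3 + 2√(2 + 2/v) + 2/v, with equality when β = 1 + 2/v. -/
/-- Theorem 3 (minimization step): for 0 < v ≤ 1 and any β > 1/v, the lower-bound
expression is at least 3 + 2√(2 + 2/v) + 2/v, with equality when β = 1 + 2/v. -/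
theorem lower_bound_minimization (v : ℝ) (hv : 0 < v) (hv1 : v ≤ 1) :
    (∀ β : ℝ, 1 / v < β →
      1 + (1 + β) *
          (v * (1 + β) +
            Real.sqrt (4 + v * (6 * β * v + (1 + β ^ 2) * v - 4 * (1 + β)))) /
          (2 * (β * v - 1))
        ≥ 3 + 2 * Real.sqrt (2 + 2 / v) + 2 / v) ∧
    (1 + (1 + (1 + 2 / v)) *
        (v * (1 + (1 + 2 / v)) +
          Real.sqrt (4 + v * (6 * (1 + 2 / v) * v + (1 + (1 + 2 / v) ^ 2) * v
            - 4 * (1 + (1 + 2 / v))))) / (2 * ((1 + 2 / v) * v - 1))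
      = 3 + 2 * Real.sqrt (2 + 2 / v) + 2 / v) := by
  set T := Real.sqrt (2 + 2 / v) with hT
  have hT0 : 0 ≤ T := Real.sqrt_nonneg _
  have hT2 : T ^ 2 = 2 + 2 / v := Real.sq_sqrt (by positivity)
  have hT2v : v * T ^ 2 = 2 * (1 + v) := by
    rw [hT2]; field_simp; ring
  constructor
  · intro β hβ
    have hx : 0 < β * v - 1 := by
      rw [div_lt_iff₀ hv] at hβ; linarith
    obtain ⟨x, hxd⟩ : ∃ x, x = β * v - 1 := ⟨_, rfl⟩
    rw [← hxd] at hx ⊢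
    have hb : β = (x + 1) / v := by
      rw [hxd]; field_simp; ring
    have hR : 4 + v * (6 * β * v + (1 + β ^ 2) * v - 4 * (1 + β))
        = (x - (1 + v)) ^ 2 + 8 * v * x := by
      rw [hxd]; ring
    rw [hR]
    set S := Real.sqrt ((x - (1 + v)) ^ 2 + 8 * v * x) with hS
    have hS0 : 0 ≤ S := Real.sqrt_nonneg _
    have hS2 : S ^ 2 = (x - (1 + v)) ^ 2 + 8 * v * x := Real.sq_sqrt (by positivity)
    have h1 : 4 * (1 + v) * x ≤ (x + (1 + v)) ^ 2 := by
      nlinarith [sq_nonneg (x - (1 + v))]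
    have h2 : 4 * x * (v * T) ≤ (x + (1 + v)) * S := by
      refine (sq_le_sq₀ (by positivity) (by positivity)).1 ?_
      have e : (4 * x * (v * T)) ^ 2 = 8 * v * x * (4 * (1 + v) * x) := by
        linear_combination 16 * x ^ 2 * v * hT2v
      rw [e, mul_pow, hS2]
      have h3 : 8 * v * x * (4 * (1 + v) * x) ≤ 8 * v * x * (x + (1 + v)) ^ 2 :=
        mul_le_mul_of_nonneg_left h1 (by positivity)
      nlinarith [mul_nonneg (sq_nonneg (x + (1 + v))) (sq_nonneg (x - (1 + v)))]
    have e1 : 1 + β = (x + (1 + v)) / v := by rw [hb]; field_simp; ring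
    have e2 : v * (1 + β) = x + (1 + v) := by rw [e1]; field_simp
    rw [e2, e1]
    have e3 : 1 + (x + (1 + v)) / v * (x + (1 + v) + S) / (2 * x)
        - (3 + 2 * T + 2 / v) = ((x + (1 + v)) ^ 2 - 4 * (1 + v) * x
          + ((x + (1 + v)) * S - 4 * x * (v * T))) / (2 * v * x) := by
      field_simp; ring
    have : 0 ≤ ((x + (1 + v)) ^ 2 - 4 * (1 + v) * x
          + ((x + (1 + v)) * S - 4 * x * (v * T))) / (2 * v * x) := by
      apply div_nonneg _ (by positivity)
      linarith
    linarith
  · have hR : 4 + v * (6 * (1 + 2 / v) * v + (1 + (1 + 2 / v) ^ 2) * v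
            - 4 * (1 + (1 + 2 / v))) = (2 * v * T) ^ 2 := by
      rw [mul_pow, hT2]; field_simp; ring
    rw [hR, Real.sqrt_sq (by positivity)]
    have e : (1 + 2 / v) * v - 1 = 1 + v := by field_simp; ring
    rw [e]
    field_simp
    ring
end

section
/- Let p and v be real numbers with 0 < p ≤ 1 and 0 < v ≤ 1, and set F = 8/p + p/(2−p) − 3. Then 8/p + p/(2−p) < 3 + 2/v + 2√(2 + 2/v) if and only if v < 2/(F + 2 − 2√(F + 3)). -/
/-- Threshold on v for the Fast Approach to beat the Slow Approach: with
F = 8/p + p/(2−p) − 3, one has 8/p + p/(2−p) < 3 + 2/v + 2√(2 + 2/v) iff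
v < 2/(F + 2 − 2√(F + 3)). -/
theorem fast_vs_slow_threshold (p v : ℝ) (hp : 0 < p) (hp1 : p ≤ 1)
    (hv : 0 < v) (hv1 : v ≤ 1) :
    8 / p + p / (2 - p) < 3 + 2 / v + 2 * Real.sqrt (2 + 2 / v) ↔
      v < 2 / ((8 / p + p / (2 - p) - 3) + 2
        - 2 * Real.sqrt ((8 / p + p / (2 - p) - 3) + 3)) := by
  have hF : 9 ≤ 8 / p + p / (2 - p) := by
    have h2 : 0 < 2 - p := by linarith
    rw [div_add_div _ _ hp.ne' h2.ne', le_div_iff₀ (by positivity)]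
    nlinarith [mul_nonneg (by linarith : (0:ℝ) ≤ 8 - 5 * p) (by linarith : (0:ℝ) ≤ 1 - p)]
  generalize 8 / p + p / (2 - p) = G at hF ⊢
  have e : G - 3 + 3 = G := by ring
  rw [e]
  have hv2 : 0 < 2 / v := by positivity
  have hs := Real.sq_sqrt (by linarith : 0 ≤ 2 + 2 / v)
  have hs0 := Real.sqrt_nonneg (2 + 2 / v)
  have ht := Real.sq_sqrt (by linarith : 0 ≤ G)
  have ht3 : 3 ≤ Real.sqrt G := Real.le_sqrt_of_sq_le (by linarith)
  generalize Real.sqrt (2 + 2 / v) = s at *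
  generalize Real.sqrt G = t at *
  have hD : 0 < G - 3 + 2 - 2 * t := by nlinarith
  rw [lt_div_comm₀ hv hD]
  constructor
  · intro h
    have : t < s + 1 := by nlinarith
    nlinarith
  · intro h
    have : t < s + 1 := by nlinarith
    nlinarith
end
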